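/- Let v be a non-constant harmonic function on the open unit ball B₁ ⊂ ℝⁿ with Z(v) ∩ B_{1/2} ≠ ∅. Then there exists a constant C = C(v) > 1 such that for every x ∈ B_{1/4} with v(x) ≠ 0 there is a point x̃ ∈ B_{1/2} with |x − x̃| ≤ (3/4) · dist(x, Z(v)) and |v(x̃)| ≥ C · |v(x)|. -/

import Mathlib

open Metric Set Filter

noncomputable section

abbrev En (n : ℕ) : Type := EuclideanSpace ℝ (Fin n)

/-- The Laplacian of `u` at `x`, computed from the second iterated Fréchet derivative. -/
def laplacianAt {n : ℕ} (u : En n → ℝ) (x : En n) : ℝ :=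
  ∑ i : Fin n, iteratedFDeriv ℝ 2 u x ![EuclideanSpace.single i 1, EuclideanSpace.single i 1]

/-- `u` is harmonic on `Ω`: twice continuously differentiable with vanishing Laplacian. -/
def HarmonicOnSet {n : ℕ} (u : En n → ℝ) (Ω : Set (En n)) : Prop :=
  ContDiffOn ℝ 2 u Ω ∧ ∀ x ∈ Ω, laplacianAt u x = 0

/-- The zero set of `u` within `Ω`. -/
def zeroSet {n : ℕ} (u : En n → ℝ) (Ω : Set (En n)) : Set (En n) :=
  {x ∈ Ω | u x = 0}

/-- The collection of nodal domains of `u` in `Ω`, i.e. the connected components of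
`Ω \ Z(u)`. -/
def nodalComponents {n : ℕ} (u : En n → ℝ) (Ω : Set (En n)) : Set (Set (En n)) :=
  {C | ∃ x ∈ Ω \ zeroSet u Ω, C = connectedComponentIn (Ω \ zeroSet u Ω) x}

/-
Suppose `|u|` hardly grows near `x`: `|u| ≤ (1 + ε) |u x|` on a ball whose radius is comparable to
the distance `d` from `x` to a zero `z` of `u`. If, say, `0 < u x`, then `(1 + ε) u x - u` is
nonnegative on that ball and only `ε u x` at its centre, so Harnack's inequality and Cauchy
estimates give `‖Dᵏu(x)‖ dᵏ ≲ ε |u x|` for all `0 < k ≤ N`. Taylor's formula from `x` to `z` then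
forces `|u x| ≲ dᴺ`, whence `‖Dᴺu(x)‖ ≲ ε`. By analyticity every point `x₀` has some nonvanishing
derivative `Dᴺu(x₀)`, and this is a contradiction for `x` near `x₀` and `ε` small. So `|u|` grows by
a definite factor near every point, and compactness makes the factor uniform.

Harnack, Cauchy and smoothness all come from one mean value property, against smooth radial kernels.
-/

open MeasureTheory InnerProductSpace
open scoped Topology ContDiff Nat NNReal Laplacian

section Kernel

variable {E : Type*} [NormedAddCommGroup E] {ρ : ℝ} {z : E}

/-- The derivative of `expNegInvGlue`, the profile of the averaging kernels. -/
def glueDeriv (s : ℝ) : ℝ := s⁻¹ ^ 2 * expNegInvGlue s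

lemma hasDerivAt_expNegInvGlue (s : ℝ) : HasDerivAt expNegInvGlue (glueDeriv s) s := by
  simpa only [Polynomial.eval_one, one_mul, map_one, Polynomial.derivative_one, sub_zero, mul_one,
    Polynomial.eval_pow, Polynomial.eval_X, glueDeriv]
    using expNegInvGlue.hasDerivAt_polynomial_eval_inv_mul 1 s

lemma contDiff_glueDeriv {m : ℕ∞} : ContDiff ℝ m glueDeriv := by
  have h := expNegInvGlue.contDiff_polynomial_eval_inv_mul (n := m) (Polynomial.X ^ 2)
  simp only [Polynomial.eval_pow, Polynomial.eval_X] at h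
  exact h

lemma glueDeriv_nonneg (s : ℝ) : 0 ≤ glueDeriv s :=
  mul_nonneg (by positivity) (expNegInvGlue.nonneg s)

lemma glueDeriv_of_nonpos {s : ℝ} (hs : s ≤ 0) : glueDeriv s = 0 := by
  rw [glueDeriv, expNegInvGlue.zero_of_nonpos hs, mul_zero]

lemma glueDeriv_pos {s : ℝ} (hs : 0 < s) : 0 < glueDeriv s :=
  mul_pos (by positivity) (expNegInvGlue.pos_of_pos hs)

/-- The (unnormalised) smooth radial kernel supported in the ball of radius `ρ`, against which
harmonic functions are averaged. -/
def radialKernel (ρ : ℝ) (z : E) : ℝ := glueDeriv (ρ ^ 2 - ‖z‖ ^ 2)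

/-- A function with gradient `-2 * radialKernel ρ z • z`, used to integrate by parts against
`radialKernel ρ`. -/
def radialPotential (ρ : ℝ) (z : E) : ℝ := expNegInvGlue (ρ ^ 2 - ‖z‖ ^ 2)

lemma radialKernel_nonneg (ρ : ℝ) (z : E) : 0 ≤ radialKernel ρ z := glueDeriv_nonneg _

lemma radialKernel_neg (ρ : ℝ) (z : E) : radialKernel ρ (-z) = radialKernel ρ z := by
  rw [radialKernel, norm_neg, radialKernel]

lemma radialKernel_eq_zero_of_le_norm (hρ : 0 ≤ ρ) (hz : ρ ≤ ‖z‖) : radialKernel ρ z = 0 :=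
  glueDeriv_of_nonpos (sub_nonpos.2 (by gcongr))

lemma radialPotential_eq_zero_of_le_norm (hρ : 0 ≤ ρ) (hz : ρ ≤ ‖z‖) : radialPotential ρ z = 0 :=
  expNegInvGlue.zero_of_nonpos (sub_nonpos.2 (by gcongr))

lemma tsupport_subset_closedBall_of_eq_zero {f : E → ℝ} (h : ∀ z, ρ ≤ ‖z‖ → f z = 0) :
    tsupport f ⊆ closedBall 0 ρ :=
  closure_minimal (fun z hz ↦ mem_closedBall_zero_iff.2 (not_lt.1 fun hlt ↦ hz (h z hlt.le)))
    isClosed_closedBall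

lemma tsupport_radialKernel_subset (hρ : 0 ≤ ρ) :
    tsupport (radialKernel ρ : E → ℝ) ⊆ closedBall 0 ρ :=
  tsupport_subset_closedBall_of_eq_zero fun _ ↦ radialKernel_eq_zero_of_le_norm hρ

lemma tsupport_radialPotential_subset (hρ : 0 ≤ ρ) :
    tsupport (radialPotential ρ : E → ℝ) ⊆ closedBall 0 ρ :=
  tsupport_subset_closedBall_of_eq_zero fun _ ↦ radialPotential_eq_zero_of_le_norm hρ

variable [InnerProductSpace ℝ E]

lemma contDiff_radialKernel {m : ℕ∞} : ContDiff ℝ m (radialKernel ρ : E → ℝ) :=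
  contDiff_glueDeriv.comp (contDiff_const.sub (contDiff_norm_sq ℝ))

lemma contDiff_radialPotential {m : ℕ∞} : ContDiff ℝ m (radialPotential ρ : E → ℝ) :=
  expNegInvGlue.contDiff.comp (contDiff_const.sub (contDiff_norm_sq ℝ))

lemma continuous_radialKernel : Continuous (radialKernel ρ : E → ℝ) :=
  (contDiff_radialKernel (m := 0)).continuous

lemma fderiv_radialPotential (z e : E) :
    fderiv ℝ (radialPotential ρ) z e = -2 * inner ℝ z e * radialKernel ρ z := by
  have hsq : HasFDerivAt (fun z : E ↦ ρ ^ 2 - ‖z‖ ^ 2) (-(2 • innerSL ℝ z)) z :=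
    (hasStrictFDerivAt_norm_sq z).hasFDerivAt.const_sub (ρ ^ 2)
  have h : fderiv ℝ (radialPotential ρ) z = radialKernel ρ z • -(2 • innerSL ℝ z) :=
    ((hasDerivAt_expNegInvGlue _).comp_hasFDerivAt z hsq).fderiv
  rw [h]
  simp only [smul_neg, neg_apply, smul_apply,
    innerSL_apply_apply, smul_eq_mul, nsmul_eq_mul, Nat.cast_ofNat]
  ring

lemma hasCompactSupport_radialKernel [FiniteDimensional ℝ E] (hρ : 0 ≤ ρ) :
    HasCompactSupport (radialKernel ρ : E → ℝ) :=
  (isCompact_closedBall 0 ρ).of_isClosed_subset (isClosed_tsupport _)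
    (tsupport_radialKernel_subset hρ)

lemma hasCompactSupport_radialPotential [FiniteDimensional ℝ E] (hρ : 0 ≤ ρ) :
    HasCompactSupport (radialPotential ρ : E → ℝ) :=
  (isCompact_closedBall 0 ρ).of_isClosed_subset (isClosed_tsupport _)
    (tsupport_radialPotential_subset hρ)

lemma integral_radialKernel_pos [FiniteDimensional ℝ E] [MeasurableSpace E] [BorelSpace E]
    (hρ : 0 < ρ) : 0 < ∫ z : E, radialKernel ρ z :=
  continuous_radialKernel.integral_pos_of_hasCompactSupport_nonneg_nonzero
    (hasCompactSupport_radialKernel hρ.le) (radialKernel_nonneg ρ) (x := 0)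
    (glueDeriv_pos (by rw [norm_zero]; nlinarith)).ne'

end Kernel

section TranslateDilate

lemma integrable_smul_of_continuousOn_tsupport {X F : Type*} [TopologicalSpace X]
    [MeasurableSpace X] [OpensMeasurableSpace X] {μ : Measure X} [IsFiniteMeasureOnCompacts μ]
    [NormedAddCommGroup F] [NormedSpace ℝ F] {f : X → ℝ} {g : X → F} (hf : Continuous f)
    (hfs : HasCompactSupport f) (hg : ContinuousOn g (tsupport f)) :
    Integrable (fun y ↦ f y • g y) μ := by
  refine (integrableOn_iff_integrable_of_support_subset
    ((Function.support_smul_subset_left f g).trans (subset_tsupport f))).1 ?_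
  exact (hf.continuousOn.smul hg).integrableOn_compact' hfs (isClosed_tsupport f).measurableSet

variable {E F : Type*} [NormedAddCommGroup E] [NormedSpace ℝ E] [NormedAddCommGroup F]
  [NormedSpace ℝ F] {f : E → ℝ} {g : E → F} {x : E} {t ρ R : ℝ}

lemma add_smul_mem_closedBall {y : E} (hy : y ∈ closedBall 0 ρ) :
    x + t • y ∈ closedBall x (|t| * ρ) := by
  rw [mem_closedBall_iff_norm, add_sub_cancel_left, norm_smul, Real.norm_eq_abs]
  gcongr
  exact mem_closedBall_zero_iff.1 hy

lemma hasFDerivAt_comp_add_smul {y : E} (hg : DifferentiableAt ℝ g (x + t • y)) :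
    HasFDerivAt (fun y ↦ g (x + t • y)) (t • fderiv ℝ g (x + t • y)) y := by
  have haff : HasFDerivAt (fun y : E ↦ x + t • y) (t • ContinuousLinearMap.id ℝ E) y :=
    ((hasFDerivAt_id y).const_smul t).const_add x
  exact (hg.hasFDerivAt.comp y haff).congr_fderiv (by ext; simp)

lemma hasDerivAt_comp_add_smul {y : E} (hg : DifferentiableAt ℝ g (x + t • y)) :
    HasDerivAt (fun t ↦ g (x + t • y)) (fderiv ℝ g (x + t • y) y) t := by
  have hline : HasDerivAt (fun t : ℝ ↦ x + t • y) y t := by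
    simpa only [one_smul] using ((hasDerivAt_id' t).smul_const y).const_add x
  exact hg.hasFDerivAt.comp_hasDerivAt t hline

variable [MeasurableSpace E] [BorelSpace E] {μ : Measure E}

lemma integrable_fderiv_smul_comp_add_smul [IsFiniteMeasureOnCompacts μ] (hf : ContDiff ℝ 1 f)
    (hfs : HasCompactSupport f) (hg : ∀ y ∈ tsupport f, ContinuousAt g (x + t • y)) (e : E) :
    Integrable (fun y ↦ fderiv ℝ f y e • g (x + t • y)) μ :=
  integrable_smul_of_continuousOn_tsupport
    ((hf.continuous_fderiv one_ne_zero).clm_apply continuous_const) (hfs.fderiv_apply ℝ e)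
    fun y hy ↦ ((hg y (tsupport_fderiv_apply_subset ℝ e hy)).comp (f := fun y ↦ x + t • y)
      (by fun_prop)).continuousWithinAt

lemma integrable_smul_fderiv_comp_add_smul [IsFiniteMeasureOnCompacts μ] (hf : Continuous f)
    (hfs : HasCompactSupport f) (hg : ∀ y ∈ tsupport f, ContDiffAt ℝ 1 g (x + t • y)) (e : E) :
    Integrable (fun y ↦ f y • fderiv ℝ g (x + t • y) e) μ := by
  refine integrable_smul_of_continuousOn_tsupport hf hfs fun y hy ↦ ?_
  have h : ContinuousAt (fun y ↦ fderiv ℝ g (x + t • y)) y :=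
    ((hg y hy).continuousAt_fderiv one_ne_zero).comp (f := fun y ↦ x + t • y) (by fun_prop)
  exact (h.clm_apply continuousAt_const).continuousWithinAt

lemma integral_smul_fderiv_comp_add_smul [FiniteDimensional ℝ E] [μ.IsAddHaarMeasure]
    (hf : ContDiff ℝ 1 f) (hfs : HasCompactSupport f)
    (hg : ∀ y ∈ tsupport f, ContDiffAt ℝ 1 g (x + t • y)) (e : E) :
    t • ∫ y, f y • fderiv ℝ g (x + t • y) e ∂μ = -∫ y, fderiv ℝ f y e • g (x + t • y) ∂μ := by
  have hgd (y) (hy : y ∈ tsupport f) :=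
    hasFDerivAt_comp_add_smul ((hg y hy).differentiableAt one_ne_zero)
  have hderiv : (fun y ↦ f y • fderiv ℝ (fun y ↦ g (x + t • y)) y e) =
      fun y ↦ t • f y • fderiv ℝ g (x + t • y) e := by
    ext y
    by_cases hy : y ∈ tsupport f
    · rw [(hgd y hy).fderiv, smul_apply, smul_comm]
    · rw [image_eq_zero_of_notMem_tsupport hy, zero_smul, zero_smul, smul_zero]
  rw [← integral_smul_fderiv_eq_neg_fderiv_smul_of_integrable
    (integrable_fderiv_smul_comp_add_smul hf hfs (fun y hy ↦ (hg y hy).continuousAt) e)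
    (hderiv ▸ (integrable_smul_fderiv_comp_add_smul hf.continuous hfs hg e).smul t)
    (integrable_smul_of_continuousOn_tsupport hf.continuous hfs
      fun y hy ↦ (hgd y hy).continuousAt.continuousWithinAt)
    (fun y _ ↦ hf.differentiable one_ne_zero y) (fun y hy ↦ (hgd y hy).differentiableAt),
    hderiv, integral_smul]

lemma hasDerivAt_integral_smul_comp_add_smul [FiniteDimensional ℝ E] [IsFiniteMeasureOnCompacts μ]
    (hf : Continuous f) (hfs : tsupport f ⊆ closedBall 0 ρ) (hρ : 0 < ρ)
    (hg : ContDiffOn ℝ 1 g (ball x R)) (ht : |t| * ρ < R) :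
    HasDerivAt (fun t ↦ ∫ y, f y • g (x + t • y) ∂μ)
      (∫ y, f y • fderiv ℝ g (x + t • y) y ∂μ) t := by
  have hfc : HasCompactSupport f :=
    (isCompact_closedBall 0 ρ).of_isClosed_subset (isClosed_tsupport f) hfs
  obtain ⟨T, htT, hTR⟩ := exists_between ((lt_div_iff₀ hρ).2 ht)
  have hmaps {s : ℝ} (hs : |s| < T) {y : E} (hy : y ∈ tsupport f) :
      x + s • y ∈ closedBall x (T * ρ) :=
    closedBall_subset_closedBall (by gcongr) (add_smul_mem_closedBall (hfs hy))
  have hsub : closedBall x (T * ρ) ⊆ ball x R := closedBall_subset_ball ((lt_div_iff₀ hρ).1 hTR)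
  have hgd {z : E} (hz : z ∈ closedBall x (T * ρ)) : DifferentiableAt ℝ g z :=
    (hg.contDiffAt (isOpen_ball.mem_nhds (hsub hz))).differentiableAt one_ne_zero
  have hg' : ContinuousOn (fderiv ℝ g) (closedBall x (T * ρ)) :=
    (hg.continuousOn_fderiv_of_isOpen isOpen_ball le_rfl).mono hsub
  obtain ⟨A, hA⟩ := (isCompact_closedBall x (T * ρ)).exists_bound_of_continuousOn hg'
  have hint {s : ℝ} (hs : |s| < T) : Integrable (fun y ↦ f y • g (x + s • y)) μ :=
    integrable_smul_of_continuousOn_tsupport hf hfc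
      ((hg.continuousOn.mono hsub).comp (by fun_prop) fun _ ↦ hmaps hs)
  have hint' : Integrable (fun y ↦ f y • fderiv ℝ g (x + t • y) y) μ :=
    integrable_smul_of_continuousOn_tsupport hf hfc
      ((hg'.comp (by fun_prop) fun _ ↦ hmaps htT).clm_apply continuousOn_id)
  have hnhds : {s : ℝ | |s| < T} ∈ 𝓝 t := (isOpen_lt continuous_abs continuous_const).mem_nhds htT
  refine (hasDerivAt_integral_of_dominated_loc_of_deriv_le
    (F := fun s y ↦ f y • g (x + s • y)) (F' := fun s y ↦ f y • fderiv ℝ g (x + s • y) y)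
    (bound := fun y ↦ ‖f y • ‖y‖‖ * A) hnhds ?_ (hint htT) hint'.aestronglyMeasurable
    (.of_forall fun y s hs ↦ ?_) ?_ (.of_forall fun y s hs ↦ ?_)).2
  · filter_upwards [hnhds] with s hs using (hint hs).aestronglyMeasurable
  · by_cases hy : y ∈ tsupport f
    · rw [norm_smul, norm_smul, norm_norm, mul_assoc, mul_comm ‖y‖]
      gcongr
      exact (fderiv ℝ g _).le_of_opNorm_le (hA _ (hmaps hs hy)) y
    · simp [image_eq_zero_of_notMem_tsupport hy]
  · exact (integrable_smul_of_continuousOn_tsupport hf hfc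
      continuous_norm.continuousOn).norm.mul_const A
  · by_cases hy : y ∈ tsupport f
    · exact (hasDerivAt_comp_add_smul (hgd (hmaps hs hy))).const_smul (f y)
    · simpa only [image_eq_zero_of_notMem_tsupport hy, zero_smul] using hasDerivAt_const s (0 : F)

end TranslateDilate

section MeanValue

variable {E F : Type*} [NormedAddCommGroup E] [InnerProductSpace ℝ E] [NormedAddCommGroup F]
  [NormedSpace ℝ F] {u : E → F} {x : E} {t ρ R : ℝ}

lemma radialKernel_smul_eq_sum {ι : Type*} [Fintype ι] (b : OrthonormalBasis ι ℝ E)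
    (L : E →L[ℝ] F) (y : E) :
    radialKernel ρ y • L y =
      (-(1 / 2) : ℝ) • ∑ i, fderiv ℝ (radialPotential ρ) y (b i) • L (b i) := by
  have hy : L y = ∑ i, inner ℝ y (b i) • L (b i) := by
    conv_lhs => rw [← b.sum_repr' y, map_sum]
    simp only [map_smul, real_inner_comm]
  rw [hy, Finset.smul_sum, Finset.smul_sum]
  refine Finset.sum_congr rfl fun i _ ↦ ?_
  rw [fderiv_radialPotential, smul_smul, smul_smul]
  congr 1
  ring

variable [FiniteDimensional ℝ E]

lemma laplacian_eq_sum_fderiv_fderiv {ι : Type*} [Fintype ι] (b : OrthonormalBasis ι ℝ E)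
    (hu : ContDiffAt ℝ 2 u x) : Δ u x = ∑ i, fderiv ℝ (fun z ↦ fderiv ℝ u z (b i)) x (b i) := by
  have hu' : DifferentiableAt ℝ (fderiv ℝ u) x :=
    (hu.fderiv_right (m := 1) (by norm_num)).differentiableAt one_ne_zero
  rw [laplacian_eq_iteratedFDeriv_orthonormalBasis u b]
  refine Finset.sum_congr rfl fun i _ ↦ ?_
  rw [iteratedFDeriv_two_apply, fderiv_clm_apply hu' (differentiableAt_const _)]
  simp

variable [MeasurableSpace E] [BorelSpace E]

lemma integral_radialKernel_smul_fderiv (hρ : 0 ≤ ρ)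
    (hu : ∀ y ∈ closedBall x (|t| * ρ), ContDiffAt ℝ 2 u y) :
    ∫ y, radialKernel ρ y • fderiv ℝ u (x + t • y) y =
      (t / 2) • ∫ y, radialPotential ρ y • Δ u (x + t • y) := by
  let b := stdOrthonormalBasis ℝ E
  have hP : ContDiff ℝ 1 (radialPotential ρ : E → ℝ) := contDiff_radialPotential (m := 1)
  have hPs := hasCompactSupport_radialPotential (E := E) hρ
  have huP (y) (hy : y ∈ tsupport (radialPotential ρ)) : ContDiffAt ℝ 2 u (x + t • y) :=
    hu _ (add_smul_mem_closedBall (tsupport_radialPotential_subset hρ hy))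
  have hui (i) (y) (hy : y ∈ tsupport (radialPotential ρ)) :
      ContDiffAt ℝ 1 (fun z ↦ fderiv ℝ u z (b i)) (x + t • y) :=
    ((huP y hy).fderiv_right (by norm_num)).clm_apply contDiffAt_const
  have hlap (y : E) : radialPotential ρ y • Δ u (x + t • y) =
      ∑ i, radialPotential ρ y • fderiv ℝ (fun z ↦ fderiv ℝ u z (b i)) (x + t • y) (b i) := by
    by_cases hy : y ∈ tsupport (radialPotential ρ)
    · rw [laplacian_eq_sum_fderiv_fderiv b (huP y hy), Finset.smul_sum]
    · simp [image_eq_zero_of_notMem_tsupport hy]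
  simp_rw [radialKernel_smul_eq_sum b, hlap]
  rw [integral_smul, integral_finsetSum _ fun i _ ↦ integrable_fderiv_smul_comp_add_smul hP hPs
      (fun y hy ↦ (hui i y hy).continuousAt) (b i),
    integral_finsetSum _ fun i _ ↦ integrable_smul_fderiv_comp_add_smul hP.continuous hPs
      (hui i) (b i), Finset.smul_sum, Finset.smul_sum]
  refine Finset.sum_congr rfl fun i _ ↦ ?_
  rw [← neg_eq_iff_eq_neg.2 (integral_smul_fderiv_comp_add_smul hP hPs (hui i) (b i)), smul_neg,
    neg_smul, neg_neg, smul_smul]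
  congr 1
  ring

variable [CompleteSpace F]

theorem integral_radialKernel_smul_of_harmonicOnNhd (hρ : 0 < ρ)
    (hu : HarmonicOnNhd u (ball x R)) (ht : |t| * ρ < R) :
    ∫ y, radialKernel ρ y • u (x + t • y) = (∫ y : E, radialKernel ρ y) • u x := by
  have hderiv {s : ℝ} (hs : |s| * ρ < R) :
      HasDerivAt (fun s ↦ ∫ y, radialKernel ρ y • u (x + s • y)) 0 s := by
    have hball : closedBall x (|s| * ρ) ⊆ ball x R := closedBall_subset_ball hs
    have hzero (y : E) : radialPotential ρ y • Δ u (x + s • y) = 0 := by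
      by_cases hy : y ∈ tsupport (radialPotential ρ)
      · have hmem := hball (add_smul_mem_closedBall (tsupport_radialPotential_subset hρ.le hy))
        rw [(hu _ hmem).2.self_of_nhds, Pi.zero_apply, smul_zero]
      · rw [image_eq_zero_of_notMem_tsupport hy, zero_smul]
    have h := hasDerivAt_integral_smul_comp_add_smul (μ := volume) continuous_radialKernel
      (tsupport_radialKernel_subset hρ.le) hρ (hu.contDiffOn.of_le one_le_two) hs
    rwa [integral_radialKernel_smul_fderiv hρ.le fun y hy ↦ (hu y (hball hy)).1,
      integral_congr_ae (.of_forall hzero), integral_zero, smul_zero] at h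
  have hmem {s : ℝ} : s ∈ ball 0 (R / ρ) ↔ |s| * ρ < R := by
    rw [mem_ball_zero_iff, Real.norm_eq_abs, lt_div_iff₀ hρ]
  have h0 : |0| * ρ < R := by
    rw [abs_zero, zero_mul]
    exact (by positivity : 0 ≤ |t| * ρ).trans_lt ht
  have h := isOpen_ball.is_const_of_deriv_eq_zero (convex_ball 0 (R / ρ)).isPreconnected
    (fun s hs ↦ (hderiv (hmem.1 hs)).differentiableAt.differentiableWithinAt)
    (fun s hs ↦ (hderiv (hmem.1 hs)).deriv) (hmem.2 ht) (hmem.2 h0)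
  simpa only [zero_smul, add_zero, integral_smul_const] using h

end MeanValue

section Derivatives

lemma fderiv_fderiv_apply_comm {E F : Type*} [NormedAddCommGroup E] [NormedSpace ℝ E]
    [NormedAddCommGroup F] [NormedSpace ℝ F] {u : E → F} {x a b : E} (hu : ContDiffAt ℝ 2 u x) :
    fderiv ℝ (fun z ↦ fderiv ℝ u z a) x b = fderiv ℝ (fun z ↦ fderiv ℝ u z b) x a := by
  have hu' : DifferentiableAt ℝ (fderiv ℝ u) x :=
    (hu.fderiv_right (m := 1) (by norm_num)).differentiableAt one_ne_zero
  have happly (c d : E) : fderiv ℝ (fun z ↦ fderiv ℝ u z c) x d = fderiv ℝ (fderiv ℝ u) x d c := by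
    rw [fderiv_clm_apply hu' (differentiableAt_const c)]
    simp
  rw [happly, happly]
  exact hu.isSymmSndFDerivAt (by simp) b a

variable {E F : Type*} [NormedAddCommGroup E] [InnerProductSpace ℝ E] [FiniteDimensional ℝ E]
  [NormedAddCommGroup F] [NormedSpace ℝ F] {u : E → F} {x : E}

lemma exists_harmonicOnNhd_ball (hu : HarmonicAt u x) : ∃ R > 0, HarmonicOnNhd u (ball x R) :=
  eventually_nhds_iff_ball.1 hu.eventually

theorem laplacian_fderiv (hu : ContDiffAt ℝ 3 u x) :
    Δ (fderiv ℝ u) x = fderiv ℝ (Δ u) x := by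
  let b := stdOrthonormalBasis ℝ E
  have hu2 : ∀ᶠ z in 𝓝 x, ContDiffAt ℝ 2 u z :=
    (hu.eventually (by simp)).mono fun z hz ↦ hz.of_le (by norm_num)
  have hdir (a : E) : ContDiffAt ℝ 2 (fun z ↦ fderiv ℝ u z a) x :=
    (hu.fderiv_right (by norm_num)).clm_apply contDiffAt_const
  have hdir2 (a : E) : DifferentiableAt ℝ (fun z ↦ fderiv ℝ (fun y ↦ fderiv ℝ u y a) z a) x :=
    (((hdir a).fderiv_right (m := 1) (by norm_num)).clm_apply
      contDiffAt_const).differentiableAt one_ne_zero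
  have hlap : Δ u =ᶠ[𝓝 x]
      fun z ↦ ∑ i, fderiv ℝ (fun y ↦ fderiv ℝ u y (b i)) z (b i) :=
    hu2.mono fun z hz ↦ laplacian_eq_sum_fderiv_fderiv b hz
  ext e
  have heval := (hu.fderiv_right (m := 2) (by norm_num)).laplacian_CLM_comp_left
    (l := ContinuousLinearMap.apply ℝ F e)
  calc Δ (fderiv ℝ u) x e = Δ (fun z ↦ fderiv ℝ u z e) x := heval.symm
    _ = ∑ i, fderiv ℝ (fun z ↦ fderiv ℝ (fun y ↦ fderiv ℝ u y e) z (b i)) x (b i) :=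
      laplacian_eq_sum_fderiv_fderiv b (hdir e)
    _ = ∑ i, fderiv ℝ (fun z ↦ fderiv ℝ (fun y ↦ fderiv ℝ u y (b i)) z e) x (b i) := by
      refine Finset.sum_congr rfl fun i _ ↦ ?_
      rw [EventuallyEq.fderiv_eq (hu2.mono fun z hz ↦ fderiv_fderiv_apply_comm hz)]
    _ = ∑ i, fderiv ℝ (fun z ↦ fderiv ℝ (fun y ↦ fderiv ℝ u y (b i)) z (b i)) x e :=
      Finset.sum_congr rfl fun i _ ↦ fderiv_fderiv_apply_comm (hdir (b i))
    _ = fderiv ℝ (Δ u) x e := by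
      rw [hlap.fderiv_eq, fderiv_fun_sum fun i _ ↦ hdir2 (b i), _root_.sum_apply]

variable [CompleteSpace F]

theorem contDiffAt_of_harmonicAt (hu : HarmonicAt u x) : ContDiffAt ℝ ∞ u x := by
  borelize E
  obtain ⟨R, hR, hball⟩ := exists_harmonicOnNhd_ball hu
  have hρ : 0 < R / 3 := by positivity
  let w : E → F := indicator (closedBall x (2 * (R / 3))) u
  have hw : Integrable w :=
    ((hball.continuousOn.mono (closedBall_subset_ball (by linarith))).integrableOn_compact
      (isCompact_closedBall _ _)).integrable_indicator measurableSet_closedBall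
  have hsmooth : ContDiff ℝ ∞ (convolution (radialKernel (R / 3)) w (.lsmul ℝ ℝ) volume) :=
    (hasCompactSupport_radialKernel hρ.le).contDiff_convolution_left _ contDiff_radialKernel
      hw.locallyIntegrable
  refine (hsmooth.const_smul
    (∫ z : E, radialKernel (R / 3) z)⁻¹).contDiffAt.congr_of_eventuallyEq ?_
  filter_upwards [ball_mem_nhds x hρ] with y hy
  have hyR : ball y (2 * (R / 3)) ⊆ ball x R :=
    ball_subset_ball' (by rw [mem_ball] at hy; linarith)
  have hmean := integral_radialKernel_smul_of_harmonicOnNhd hρ (hball.mono hyR) (t := 1)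
    (by rw [abs_one]; linarith)
  rw [eq_inv_smul_iff₀ (integral_radialKernel_pos hρ).ne', ← hmean, convolution_def,
    ← integral_neg_eq_self (fun z ↦ ContinuousLinearMap.lsmul ℝ ℝ (radialKernel _ z) (w (y - z)))]
  refine integral_congr_ae (.of_forall fun z ↦ ?_)
  simp only [one_smul, ContinuousLinearMap.lsmul_apply, radialKernel_neg, sub_neg_eq_add]
  by_cases hz : R / 3 ≤ ‖z‖
  · rw [radialKernel_eq_zero_of_le_norm hρ.le hz, zero_smul, zero_smul]
  · have hmem : y + z ∈ closedBall x (2 * (R / 3)) := by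
      rw [mem_ball_iff_norm] at hy
      rw [mem_closedBall_iff_norm, add_sub_right_comm]
      linarith [norm_add_le (y - x) z]
    simp only [w, indicator_of_mem hmem]

theorem harmonicAt_fderiv (hu : HarmonicAt u x) : HarmonicAt (fderiv ℝ u) x := by
  refine ⟨(contDiffAt_of_harmonicAt hu).fderiv_right (by norm_cast), ?_⟩
  filter_upwards [hu.2.eventuallyEq_nhds, hu.eventually] with z hz hzu
  rw [laplacian_fderiv ((contDiffAt_of_harmonicAt hzu).of_le (by norm_cast)), hz.fderiv_eq]
  simp

theorem harmonicAt_iteratedFDeriv (hu : HarmonicAt u x) (k : ℕ) :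
    HarmonicAt (iteratedFDeriv ℝ k u) x := by
  induction k with
  | zero =>
    exact (harmonicAt_comp_CLE_iff
      (continuousMultilinearCurryFin0 ℝ E F).symm.toContinuousLinearEquiv).2 hu
  | succ k ih =>
    exact (harmonicAt_comp_CLE_iff (continuousMultilinearCurryLeftEquiv ℝ
      (fun _ : Fin (k + 1) ↦ E) F).symm.toContinuousLinearEquiv).2 (harmonicAt_fderiv ih)

end Derivatives

section Cauchy

lemma norm_integral_fderiv_smul_le {E F : Type*} [NormedAddCommGroup E] [NormedSpace ℝ E]
    [MeasurableSpace E] [OpensMeasurableSpace E] {μ : Measure E} [IsFiniteMeasureOnCompacts μ]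
    [NormedAddCommGroup F] [NormedSpace ℝ F] {f : E → ℝ} {v : E → F} {S : ℝ}
    (hf : ContDiff ℝ 1 f) (hfs : HasCompactSupport f) (hS : ∀ y ∈ tsupport f, ‖v y‖ ≤ S) (e : E) :
    ‖∫ y, fderiv ℝ f y e • v y ∂μ‖ ≤ (∫ y, ‖fderiv ℝ f y‖ ∂μ) * (‖e‖ * S) := by
  have hint : Integrable (fun y ↦ ‖fderiv ℝ f y‖ * (‖e‖ * S)) μ :=
    ((hf.continuous_fderiv one_ne_zero).integrable_of_hasCompactSupport
      (hfs.fderiv ℝ)).norm.mul_const _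
  rw [← integral_mul_const]
  refine norm_integral_le_of_norm_le hint (.of_forall fun y ↦ ?_)
  rw [norm_smul, ← mul_assoc]
  by_cases hy : y ∈ tsupport f
  · gcongr
    · exact ContinuousLinearMap.le_opNorm _ e
    · exact hS y hy
  · simp [fderiv_of_notMem_tsupport ℝ hy]

variable {E F : Type*} [NormedAddCommGroup E] [InnerProductSpace ℝ E] [FiniteDimensional ℝ E]
  [MeasurableSpace E] [BorelSpace E] [NormedAddCommGroup F] [NormedSpace ℝ F] [CompleteSpace F]
  {u : E → F} {x : E} {s R S : ℝ}

variable (E) in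
/-- The constant in the gradient estimate for harmonic functions on balls of `E`. The factor `2`
comes from averaging over the ball of half the radius. -/
def gradientConst : ℝ :=
  2 * ((∫ z : E, ‖fderiv ℝ (radialKernel 1) z‖) / ∫ z : E, radialKernel 1 z)

lemma gradientConst_nonneg : 0 ≤ gradientConst E :=
  mul_nonneg zero_le_two (div_nonneg (integral_nonneg fun _ ↦ norm_nonneg _)
    (integral_radialKernel_pos one_pos).le)

theorem norm_fderiv_le_of_harmonicOnNhd_ball (hR : 0 < R) (hu : HarmonicOnNhd u (ball x R))
    (hS : ∀ y ∈ ball x R, ‖u y‖ ≤ S) : ‖fderiv ℝ u x‖ ≤ gradientConst E / R * S := by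
  have hM : 0 < ∫ z : E, radialKernel 1 z := integral_radialKernel_pos one_pos
  have hS0 : 0 ≤ S := (norm_nonneg _).trans (hS x (mem_ball_self hR))
  have hk : ContDiff ℝ 1 (radialKernel 1 : E → ℝ) := contDiff_radialKernel (m := 1)
  have hks := hasCompactSupport_radialKernel (E := E) zero_le_one
  have hR2 : |R / 2| * 1 < R := by rw [abs_of_pos (by positivity)]; linarith
  have hmem (y : E) (hy : y ∈ tsupport (radialKernel 1)) : x + (R / 2) • y ∈ ball x R :=
    closedBall_subset_ball hR2
      (add_smul_mem_closedBall (tsupport_radialKernel_subset zero_le_one hy))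
  refine ContinuousLinearMap.opNorm_le_bound _
    (mul_nonneg (div_nonneg gradientConst_nonneg hR.le) hS0) fun e ↦ ?_
  have hmean : ∫ y, radialKernel 1 y • fderiv ℝ u (x + (R / 2) • y) e =
      (∫ y : E, radialKernel 1 y) • fderiv ℝ u x e :=
    integral_radialKernel_smul_of_harmonicOnNhd one_pos
      (fun y hy ↦ (harmonicAt_fderiv (hu y hy)).comp_CLM (ContinuousLinearMap.apply ℝ F e)) hR2
  have hparts := integral_smul_fderiv_comp_add_smul (μ := volume) hk hks
    (fun y hy ↦ (hu _ (hmem y hy)).1.of_le one_le_two) e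
  have hnorm := norm_integral_fderiv_smul_le (μ := volume) hk hks (fun y hy ↦ hS _ (hmem y hy)) e
  rw [← norm_neg, ← hparts, hmean, norm_smul, norm_smul, Real.norm_of_nonneg (by positivity),
    Real.norm_of_nonneg hM.le] at hnorm
  calc ‖fderiv ℝ u x e‖
      = R / 2 * ((∫ y : E, radialKernel 1 y) * ‖fderiv ℝ u x e‖) /
          (R / 2 * ∫ y : E, radialKernel 1 y) := by field_simp
    _ ≤ (∫ y : E, ‖fderiv ℝ (radialKernel 1) y‖) * (‖e‖ * S) /
          (R / 2 * ∫ y : E, radialKernel 1 y) := by gcongr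
    _ = gradientConst E / R * S * ‖e‖ := by rw [gradientConst]; field_simp

theorem norm_iteratedFDeriv_le_of_mul_lt (hs : 0 < s) {k : ℕ} (hks : k * s < R)
    (hu : HarmonicOnNhd u (ball x R)) (hS : ∀ y ∈ ball x R, ‖u y‖ ≤ S) :
    ‖iteratedFDeriv ℝ k u x‖ ≤ (gradientConst E / s) ^ k * S := by
  induction k generalizing x R with
  | zero =>
    simpa using hS x (mem_ball_self (by simpa using hks))
  | succ k ih =>
    push_cast at hks
    have hsR : s ≤ R := by nlinarith [k.cast_nonneg (α := ℝ)]
    rw [← norm_fderiv_iteratedFDeriv, pow_succ', mul_assoc]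
    refine norm_fderiv_le_of_harmonicOnNhd_ball hs
      (fun y hy ↦ harmonicAt_iteratedFDeriv (hu y (ball_subset_ball hsR hy)) k) fun y hy ↦ ?_
    have hyR : ball y (R - s) ⊆ ball x R := ball_subset_ball' (by rw [mem_ball] at hy; linarith)
    exact ih (by linarith) (hu.mono hyR) fun z hz ↦ hS z (hyR hz)

theorem norm_iteratedFDeriv_le_of_harmonicOnNhd_ball (hR : 0 < R)
    (hu : HarmonicOnNhd u (ball x R)) (hS : ∀ y ∈ ball x R, ‖u y‖ ≤ S) (k : ℕ) :
    ‖iteratedFDeriv ℝ k u x‖ ≤ (gradientConst E * (k + 1) / R) ^ k * S := by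
  rw [← div_div_eq_mul_div]
  refine norm_iteratedFDeriv_le_of_mul_lt (by positivity) ?_ hu hS
  rw [mul_div_assoc', div_lt_iff₀ (by positivity), mul_comm]
  gcongr
  exact lt_add_one _

theorem norm_iteratedFDeriv_le_factorial_of_harmonicOnNhd_ball (hR : 0 < R)
    (hu : HarmonicOnNhd u (ball x R)) (hS : ∀ y ∈ ball x R, ‖u y‖ ≤ S) (k : ℕ) :
    ‖iteratedFDeriv ℝ k u x‖ ≤
      Real.exp 1 * S * (gradientConst E / R * Real.exp 1) ^ k * k ! := by
  have hS0 : 0 ≤ S := (norm_nonneg _).trans (hS x (mem_ball_self hR))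
  have hG : 0 ≤ gradientConst E / R := div_nonneg gradientConst_nonneg hR.le
  have hk : ((k : ℝ) + 1) ^ k ≤ Real.exp 1 ^ (k + 1) * k ! := by
    rw [← div_le_iff₀ (by positivity), ← Real.exp_nat_mul, mul_one]
    exact_mod_cast Real.pow_div_factorial_le_exp (x := k + 1) (by positivity) k
  calc ‖iteratedFDeriv ℝ k u x‖ ≤ (gradientConst E * (k + 1) / R) ^ k * S :=
        norm_iteratedFDeriv_le_of_harmonicOnNhd_ball hR hu hS k
    _ = (gradientConst E / R) ^ k * ((k : ℝ) + 1) ^ k * S := by rw [← mul_pow]; ring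
    _ ≤ (gradientConst E / R) ^ k * (Real.exp 1 ^ (k + 1) * k !) * S := by gcongr
    _ = Real.exp 1 * S * (gradientConst E / R * Real.exp 1) ^ k * k ! := by rw [mul_pow]; ring

end Cauchy

section Taylor

variable {E F : Type*} [NormedAddCommGroup E] [NormedSpace ℝ E] [NormedAddCommGroup F]
  [NormedSpace ℝ F] [CompleteSpace F] {f : E → F} {x y : E}

lemma norm_sub_sum_iteratedFDeriv_le {n : ℕ} {M : ℝ}
    (hf : ∀ t ∈ Icc (0 : ℝ) 1, ContDiffAt ℝ (n + 1) f (x + t • y))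
    (hM : ∀ t ∈ Icc (0 : ℝ) 1, ‖iteratedFDeriv ℝ (n + 1) f (x + t • y)‖ ≤ M) :
    ‖f (x + y) - ∑ k ∈ Finset.range (n + 1), (k ! : ℝ)⁻¹ • iteratedFDeriv ℝ k f x fun _ ↦ y‖ ≤
      M * ‖y‖ ^ (n + 1) / (n + 1)! := by
  rw [map_add_eq_sum_add_integral_iteratedFDeriv hf, add_sub_cancel_left, norm_smul, norm_inv,
    Real.norm_natCast]
  have hint : ∫ t : ℝ in 0..1, (1 - t) ^ n * (M * ‖y‖ ^ (n + 1)) =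
      M * ‖y‖ ^ (n + 1) / (n + 1) := by
    rw [intervalIntegral.integral_mul_const,
      intervalIntegral.integral_comp_sub_left (fun t : ℝ ↦ t ^ n), integral_pow]
    simp
    ring
  calc (n ! : ℝ)⁻¹ * ‖∫ t in 0..1, (1 - t) ^ n • iteratedFDeriv ℝ (n + 1) f (x + t • y) fun _ ↦ y‖
      ≤ (n ! : ℝ)⁻¹ * ∫ t in 0..1, (1 - t) ^ n * (M * ‖y‖ ^ (n + 1)) := by
        gcongr
        refine intervalIntegral.norm_integral_le_of_norm_le zero_le_one (.of_forall fun t ht ↦ ?_)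
          (Continuous.intervalIntegrable (by fun_prop) _ _)
        have ht' : t ∈ Icc (0 : ℝ) 1 := Ioc_subset_Icc_self ht
        have h1t : 0 ≤ 1 - t := sub_nonneg.2 ht'.2
        rw [norm_smul, norm_pow, Real.norm_of_nonneg h1t]
        gcongr
        refine (ContinuousMultilinearMap.le_opNorm _ _).trans ?_
        rw [Finset.prod_const, Finset.card_univ, Fintype.card_fin]
        gcongr
        exact hM t ht'
    _ = M * ‖y‖ ^ (n + 1) / (n + 1)! := by
        rw [hint, Nat.factorial_succ]
        push_cast
        field_simp

theorem hasFPowerSeriesOnBall_of_norm_iteratedFDeriv_le {A B : ℝ} {r : ℝ≥0} (hr : 0 < r)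
    (hA : 0 ≤ A) (hAr : A * r < 1) (hf : ∀ y ∈ ball x r, ContDiffAt ℝ ∞ f y)
    (hAB : ∀ k : ℕ, ∀ y ∈ ball x r, ‖iteratedFDeriv ℝ k f y‖ ≤ B * A ^ k * k !) :
    HasFPowerSeriesOnBall f (fun k ↦ (k ! : ℝ)⁻¹ • iteratedFDeriv ℝ k f x) x r := by
  have hx : x ∈ ball x r := mem_ball_self hr
  have hB : 0 ≤ B := by simpa using (norm_nonneg _).trans (hAB 0 x hx)
  set p : FormalMultilinearSeries ℝ E F := fun k ↦ (k ! : ℝ)⁻¹ • iteratedFDeriv ℝ k f x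
  have hp : r ≤ p.radius := by
    refine p.le_radius_of_bound B fun k ↦ ?_
    calc ‖p k‖ * r ^ k ≤ ((k ! : ℝ)⁻¹ * (B * A ^ k * k !)) * r ^ k := by
          rw [norm_smul, norm_inv, Real.norm_natCast]
          gcongr
          exact hAB k x hx
      _ = B * (A * r) ^ k := by rw [mul_pow]; field_simp
      _ ≤ B := mul_le_of_le_one_right hB (pow_le_one₀ (by positivity) hAr.le)
  refine ⟨hp, ENNReal.coe_pos.2 hr, fun {y} hy ↦ ?_⟩
  have hyr : ‖y‖ < r := by simpa using hy
  have hseg : ∀ t ∈ Icc (0 : ℝ) 1, x + t • y ∈ ball x r := fun t ht ↦ by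
    rw [mem_ball_iff_norm, add_sub_cancel_left, norm_smul, Real.norm_of_nonneg ht.1]
    exact (mul_le_of_le_one_left (norm_nonneg y) ht.2).trans_lt hyr
  refine (p.summable (eball_subset_eball hp hy)).hasSum_iff_tendsto_nat.2 ?_
  rw [← tendsto_add_atTop_iff_nat 1, tendsto_iff_norm_sub_tendsto_zero]
  have hlim : Tendsto (fun n : ℕ ↦ B * (A * ‖y‖) ^ (n + 1)) atTop (𝓝 0) := by
    rw [tendsto_add_atTop_iff_nat (f := fun n ↦ B * (A * ‖y‖) ^ n) 1, ← mul_zero B]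
    exact (tendsto_pow_atTop_nhds_zero_of_lt_one (by positivity)
      ((mul_le_mul_of_nonneg_left hyr.le hA).trans_lt hAr)).const_mul B
  refine squeeze_zero (fun _ ↦ norm_nonneg _) (fun n ↦ ?_) hlim
  rw [norm_sub_rev]
  calc ‖f (x + y) - ∑ k ∈ Finset.range (n + 1), p k fun _ ↦ y‖
      ≤ B * A ^ (n + 1) * (n + 1)! * ‖y‖ ^ (n + 1) / (n + 1)! :=
        norm_sub_sum_iteratedFDeriv_le
          (fun t ht ↦ (hf _ (hseg t ht)).of_le (mod_cast le_top)) fun t ht ↦ hAB _ _ (hseg t ht)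
    _ = B * (A * ‖y‖) ^ (n + 1) := by rw [mul_pow]; field_simp

end Taylor

section UniqueContinuation

variable {E F : Type*} [NormedAddCommGroup E] [InnerProductSpace ℝ E] [FiniteDimensional ℝ E]
  [NormedAddCommGroup F] [NormedSpace ℝ F] [CompleteSpace F] {u : E → F} {x : E} {Ω : Set E}

theorem hasFPowerSeriesAt_of_harmonicAt (hu : HarmonicAt u x) :
    HasFPowerSeriesAt u (fun k ↦ (k ! : ℝ)⁻¹ • iteratedFDeriv ℝ k u x) x := by
  borelize E
  obtain ⟨R, hR, hball⟩ := exists_harmonicOnNhd_ball hu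
  obtain ⟨S, hS⟩ := (isCompact_closedBall x (R / 2)).exists_bound_of_continuousOn
    (hball.continuousOn.mono (closedBall_subset_ball (by linarith)))
  let A : ℝ := gradientConst E / (R / 4) * Real.exp 1
  have hA : 0 ≤ A :=
    mul_nonneg (div_nonneg gradientConst_nonneg (by positivity)) (Real.exp_pos 1).le
  have hmin : 0 < min (R / 4) (A + 1)⁻¹ := lt_min (by positivity) (by positivity)
  let r : ℝ≥0 := ⟨min (R / 4) (A + 1)⁻¹, hmin.le⟩
  have hAr : A * r < 1 := calc
    A * r ≤ A * (A + 1)⁻¹ := mul_le_mul_of_nonneg_left (min_le_right _ _) hA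
    _ < 1 := by rw [mul_inv_lt_iff₀ (by positivity)]; linarith
  have hrR : (r : ℝ) ≤ R / 4 := min_le_left _ _
  refine (hasFPowerSeriesOnBall_of_norm_iteratedFDeriv_le (r := r) hmin hA hAr (B := Real.exp 1 * S)
    (fun y hy ↦ contDiffAt_of_harmonicAt (hball y (ball_subset_ball (by linarith) hy)))
    fun k y hy ↦ ?_).hasFPowerSeriesAt
  have hyR : ball y (R / 4) ⊆ ball x (R / 2) :=
    ball_subset_ball' (by rw [mem_ball] at hy; linarith)
  exact norm_iteratedFDeriv_le_factorial_of_harmonicOnNhd_ball (by positivity)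
    (hball.mono (hyR.trans (ball_subset_ball (by linarith))))
    (fun z hz ↦ hS z (ball_subset_closedBall (hyR hz))) k

theorem eqOn_const_of_iteratedFDeriv_eq_zero (hΩ : IsPreconnected Ω) (hu : HarmonicOnNhd u Ω)
    (hx : x ∈ Ω) (h : ∀ k : ℕ, k ≠ 0 → iteratedFDeriv ℝ k u x = 0) :
    EqOn u (fun _ ↦ u x) Ω := by
  refine AnalyticOnNhd.eqOn_of_preconnected_of_eventuallyEq
    (fun y hy ↦ (hasFPowerSeriesAt_of_harmonicAt (hu y hy)).analyticAt)
    analyticOnNhd_const hΩ hx ?_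
  filter_upwards [(hasFPowerSeriesAt_of_harmonicAt (hu x hx)).eventually_hasSum_sub] with y hy
  have hconst := hasSum_single (f := fun k ↦ ((k ! : ℝ)⁻¹ • iteratedFDeriv ℝ k u x) fun _ ↦ y - x)
    0 fun k hk ↦ by rw [h k hk]; simp
  simpa using hy.unique hconst

end UniqueContinuation

section Harnack

lemma exists_glueDeriv_le_mul : ∃ K > 0, ∀ s ≤ 1, ∀ s' ∈ Icc (3 / 4) 1,
    glueDeriv s ≤ K * glueDeriv s' := by
  have hcont : Continuous glueDeriv := (contDiff_glueDeriv (m := 0)).continuous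
  obtain ⟨a, ha, hmin⟩ := (isCompact_Icc (a := (3 / 4 : ℝ)) (b := 1)).exists_isMinOn
    (nonempty_Icc.2 (by norm_num)) hcont.continuousOn
  obtain ⟨b, -, hmax⟩ := (isCompact_Icc (a := (0 : ℝ)) (b := 1)).exists_isMaxOn
    (nonempty_Icc.2 zero_le_one) hcont.continuousOn
  have ha0 : 0 < glueDeriv a := glueDeriv_pos (by linarith [ha.1])
  have hle (s : ℝ) (hs : s ≤ 1) : glueDeriv s ≤ glueDeriv b := by
    rcases le_total s 0 with h0 | h0
    · exact (glueDeriv_of_nonpos h0).trans_le (glueDeriv_nonneg b)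
    · exact hmax ⟨h0, hs⟩
  have hb0 : 0 < glueDeriv b := (glueDeriv_pos one_pos).trans_le (hle 1 le_rfl)
  refine ⟨glueDeriv b / glueDeriv a, div_pos hb0 ha0, fun s hs s' hs' ↦ (hle s hs).trans ?_⟩
  rw [div_mul_eq_mul_div, le_div_iff₀ ha0]
  exact mul_le_mul_of_nonneg_left (hmin hs') hb0.le

variable {E : Type*} [NormedAddCommGroup E]

variable (E) in
lemma exists_radialKernel_sub_le_mul : ∃ K > 0, ∀ z h : E, ‖h‖ ≤ 1 / 4 →
    radialKernel (1 / 4) (z - h) ≤ K * radialKernel 1 z := by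
  obtain ⟨K, hK, hle⟩ := exists_glueDeriv_le_mul
  refine ⟨K, hK, fun z h hh ↦ ?_⟩
  have htri := norm_le_norm_add_norm_sub' z h
  rcases le_total (1 / 4) ‖z - h‖ with hz | hz
  · rw [radialKernel_eq_zero_of_le_norm (by norm_num) hz]
    exact mul_nonneg hK.le (radialKernel_nonneg 1 z)
  · refine hle _ ?_ _ ⟨?_, ?_⟩ <;> nlinarith [norm_nonneg z, norm_nonneg (z - h)]

variable [InnerProductSpace ℝ E] [FiniteDimensional ℝ E]

lemma integral_radialKernel_sub_smul_of_harmonicOnNhd [MeasurableSpace E] [BorelSpace E]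
    {F : Type*} [NormedAddCommGroup F] [NormedSpace ℝ F] [CompleteSpace F] {u : E → F} {x h : E}
    {t ρ R : ℝ} (hρ : 0 < ρ) (hu : HarmonicOnNhd u (ball (x + t • h) R)) (ht : |t| * ρ < R) :
    ∫ y, radialKernel ρ (y - h) • u (x + t • y) =
      (∫ y : E, radialKernel ρ y) • u (x + t • h) := by
  rw [← integral_radialKernel_smul_of_harmonicOnNhd hρ hu ht, ← integral_add_right_eq_self _ h]
  refine integral_congr_ae (.of_forall fun y ↦ ?_)
  beta_reduce
  rw [add_sub_cancel_right, add_assoc, ← smul_add, add_comm h]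

lemma integral_radialKernel_sub_smul_le [MeasurableSpace E] [BorelSpace E] {v : E → ℝ} {h : E}
    {K ρ σ : ℝ} (hle : ∀ z, radialKernel σ (z - h) ≤ K * radialKernel ρ z) (hρ : 0 ≤ ρ)
    (hv : ContinuousOn v (closedBall 0 ρ)) (hpos : ∀ z ∈ closedBall 0 ρ, 0 ≤ v z) :
    ∫ z, radialKernel σ (z - h) • v z ≤ K * ∫ z, radialKernel ρ z • v z := by
  have hcases (z : E) : 0 ≤ v z ∨ radialKernel ρ z = 0 ∧ radialKernel σ (z - h) = 0 := by
    by_cases hz : z ∈ closedBall 0 ρ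
    · exact .inl (hpos z hz)
    · have hzρ : radialKernel ρ z = 0 := radialKernel_eq_zero_of_le_norm hρ
        (not_le.1 (mt mem_closedBall_zero_iff.2 hz)).le
      exact .inr ⟨hzρ, le_antisymm (by simpa [hzρ] using hle z) (radialKernel_nonneg _ _)⟩
  rw [← integral_const_mul]
  refine integral_mono_of_nonneg (.of_forall fun z ↦ ?_)
    ((integrable_smul_of_continuousOn_tsupport continuous_radialKernel
      (hasCompactSupport_radialKernel hρ)
      (hv.mono (tsupport_radialKernel_subset hρ))).const_mul K) (.of_forall fun z ↦ ?_)
  · rcases hcases z with hz | ⟨-, hz⟩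
    · exact mul_nonneg (radialKernel_nonneg _ _) hz
    · simp [hz]
  · rcases hcases z with hz | ⟨hzρ, hzσ⟩
    · simpa only [smul_eq_mul, mul_assoc] using mul_le_mul_of_nonneg_right (hle z) hz
    · simp [hzρ, hzσ]

variable (E) in
theorem exists_harnack_const : ∃ K > 0, ∀ (u : E → ℝ) (x : E) (R : ℝ),
    HarmonicOnNhd u (ball x R) → (∀ y ∈ ball x R, 0 ≤ u y) →
      ∀ y ∈ ball x (R / 8), u y ≤ K * u x := by
  borelize E
  obtain ⟨K, hK, hle⟩ := exists_radialKernel_sub_le_mul E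
  have hI₁ : 0 < ∫ z : E, radialKernel 1 z := integral_radialKernel_pos one_pos
  have hI₄ : 0 < ∫ z : E, radialKernel (1 / 4) z := integral_radialKernel_pos (by norm_num)
  refine ⟨K * (∫ z : E, radialKernel 1 z) / ∫ z : E, radialKernel (1 / 4) z, by positivity,
    fun u x R hu hpos y hy ↦ ?_⟩
  have hyx : ‖y - x‖ < R / 8 := mem_ball_iff_norm.1 hy
  have hR : 0 < R := by linarith [norm_nonneg (y - x)]
  have hR2 : |R / 2| * 1 < R := by rw [abs_of_pos (by positivity)]; linarith
  obtain ⟨h, rfl⟩ : ∃ h, y = x + (R / 2) • h :=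
    ⟨(R / 2)⁻¹ • (y - x), by rw [smul_inv_smul₀ (by positivity), add_sub_cancel]⟩
  have hh : ‖h‖ ≤ 1 / 4 := by
    rw [add_sub_cancel_left, norm_smul, Real.norm_of_nonneg (by positivity)] at hyx
    nlinarith
  have hmean_x := integral_radialKernel_smul_of_harmonicOnNhd one_pos hu hR2
  have hmean_y := integral_radialKernel_sub_smul_of_harmonicOnNhd (ρ := 1 / 4) (by norm_num)
    (hu.mono (ball_subset_ball' (by rw [mem_ball] at hy; linarith) :
      ball (x + (R / 2) • h) (R / 2) ⊆ ball x R)) (by rw [abs_of_pos (by positivity)]; linarith)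
  have hball {z : E} (hz : z ∈ closedBall 0 1) : x + (R / 2) • z ∈ ball x R :=
    closedBall_subset_ball hR2 (add_smul_mem_closedBall hz)
  have hcmp := integral_radialKernel_sub_smul_le (hle · h hh) zero_le_one
    (hu.continuousOn.comp (by fun_prop) fun z ↦ hball) fun z hz ↦ hpos _ (hball hz)
  simp only [Function.comp_apply] at hcmp
  rw [hmean_x, hmean_y, smul_eq_mul, smul_eq_mul] at hcmp
  rw [div_mul_eq_mul_div, le_div_iff₀ hI₄]
  linarith

variable (E) in
lemma exists_norm_iteratedFDeriv_mul_pow_le_of_nonneg (N : ℕ) :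
    ∃ K > 0, ∀ (u : E → ℝ) (x : E) (R : ℝ), 0 < R → HarmonicOnNhd u (ball x R) →
      (∀ y ∈ ball x R, 0 ≤ u y) → ∀ k ≤ N, ‖iteratedFDeriv ℝ k u x‖ * R ^ k ≤ K * u x := by
  borelize E
  obtain ⟨K, hK, hharnack⟩ := exists_harnack_const E
  have hG : 0 ≤ gradientConst E := gradientConst_nonneg
  set A := 8 * (gradientConst E * (N + 1)) + 1
  refine ⟨A ^ N * K, by positivity, fun u x R hR hu hpos k hk ↦ ?_⟩
  have hR8 : ball x (R / 8) ⊆ ball x R := ball_subset_ball (by linarith)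
  have hS : ∀ y ∈ ball x (R / 8), ‖u y‖ ≤ K * u x := fun y hy ↦ by
    rw [Real.norm_of_nonneg (hpos y (hR8 hy))]
    exact hharnack u x R hu hpos y hy
  have hux : 0 ≤ u x := hpos x (mem_ball_self hR)
  calc ‖iteratedFDeriv ℝ k u x‖ * R ^ k
      ≤ ((gradientConst E * (k + 1) / (R / 8)) ^ k * (K * u x)) * R ^ k := by
        gcongr
        exact norm_iteratedFDeriv_le_of_harmonicOnNhd_ball (by positivity) (hu.mono hR8) hS k
    _ = (8 * (gradientConst E * (k + 1))) ^ k * (K * u x) := by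
        rw [mul_right_comm, ← mul_pow]
        field_simp
    _ ≤ A ^ k * (K * u x) := by
        gcongr
        have : gradientConst E * ((k : ℝ) + 1) ≤ gradientConst E * (N + 1) := by gcongr
        linarith
    _ ≤ A ^ N * K * u x := by
        rw [mul_assoc]
        gcongr
        exact le_add_of_nonneg_left (by positivity)

variable (E) in
theorem exists_norm_iteratedFDeriv_mul_pow_le_of_abs_le (N : ℕ) :
    ∃ K > 0, ∀ (u : E → ℝ) (x : E) (R ε : ℝ), 0 < R → HarmonicOnNhd u (ball x R) →
      (∀ y ∈ ball x R, |u y| ≤ (1 + ε) * |u x|) →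
        ∀ k ≤ N, k ≠ 0 → ‖iteratedFDeriv ℝ k u x‖ * R ^ k ≤ K * (ε * |u x|) := by
  obtain ⟨K, hK, h⟩ := exists_norm_iteratedFDeriv_mul_pow_le_of_nonneg E N
  refine ⟨K, hK, fun u x R ε hR hu hle k hk hk0 ↦ ?_⟩
  wlog hux : 0 ≤ u x generalizing u
  · have hneg := this (-u) (hu.neg) (by simpa only [Pi.neg_apply, abs_neg] using hle)
      (neg_nonneg.2 (not_le.1 hux).le)
    simpa only [iteratedFDeriv_neg, Pi.neg_apply, norm_neg, abs_neg] using hneg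
  rw [abs_of_nonneg hux] at hle ⊢
  have hderiv : iteratedFDeriv ℝ k ((fun _ ↦ (1 + ε) * u x) - u) x = -iteratedFDeriv ℝ k u x := by
    rw [iteratedFDeriv_sub_apply contDiffAt_const
      ((contDiffAt_of_harmonicAt (hu x (mem_ball_self hR))).of_le (mod_cast le_top)),
      iteratedFDeriv_const_of_ne hk0, Pi.zero_apply, zero_sub]
  have hw := h _ x R hR ((harmonicOnNhd_const ((1 + ε) * u x)).sub hu)
    (fun y hy ↦ sub_nonneg.2 ((le_abs_self _).trans (hle y hy))) k hk
  rwa [hderiv, norm_neg, Pi.sub_apply, add_mul, one_mul, add_sub_cancel_left] at hw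

end Harnack

section ZeroSet

variable {E F : Type*} [NormedAddCommGroup E] [NormedSpace ℝ E] [NormedAddCommGroup F]
  [NormedSpace ℝ F] [CompleteSpace F] {f : E → F} {x y z x₀ : E}

lemma norm_le_of_apply_add_eq_zero {n : ℕ} {M : ℝ}
    (hf : ∀ t ∈ Icc (0 : ℝ) 1, ContDiffAt ℝ (n + 1) f (x + t • y))
    (hM : ∀ t ∈ Icc (0 : ℝ) 1, ‖iteratedFDeriv ℝ (n + 1) f (x + t • y)‖ ≤ M)
    (h0 : f (x + y) = 0)
    (hlow : ∑ k ∈ Finset.range n, ‖iteratedFDeriv ℝ (k + 1) f x‖ * ‖y‖ ^ (k + 1) ≤ ‖f x‖ / 2) :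
    ‖f x‖ ≤ 2 * M * ‖y‖ ^ (n + 1) := by
  have hterm (k : ℕ) : ‖((k + 1)! : ℝ)⁻¹ • iteratedFDeriv ℝ (k + 1) f x fun _ ↦ y‖ ≤
      ‖iteratedFDeriv ℝ (k + 1) f x‖ * ‖y‖ ^ (k + 1) := by
    rw [norm_smul, norm_inv, Real.norm_natCast]
    refine (mul_le_of_le_one_left (norm_nonneg _)
      (inv_le_one_of_one_le₀ (mod_cast Nat.succ_le_of_lt (k + 1).factorial_pos))).trans ?_
    simpa using (iteratedFDeriv ℝ (k + 1) f x).le_opNorm fun _ ↦ y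
  have hM0 : 0 ≤ M := (norm_nonneg _).trans (hM 0 (left_mem_Icc.2 zero_le_one))
  have htaylor := norm_sub_sum_iteratedFDeriv_le hf hM
  rw [h0, Finset.sum_range_succ', zero_sub, norm_neg] at htaylor
  simp only [Nat.factorial_zero, Nat.cast_one, inv_one, one_smul, iteratedFDeriv_zero_apply]
    at htaylor
  have hrem : M * ‖y‖ ^ (n + 1) / (n + 1)! ≤ M * ‖y‖ ^ (n + 1) :=
    div_le_self (by positivity) (mod_cast Nat.succ_le_of_lt (n + 1).factorial_pos)
  have hsum := (norm_sum_le (Finset.range n) _).trans (Finset.sum_le_sum fun k _ ↦ hterm k)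
  have htri := norm_le_norm_add_norm_sub' (f x)
    (-∑ k ∈ Finset.range n, ((k + 1)! : ℝ)⁻¹ • iteratedFDeriv ℝ (k + 1) f x fun _ ↦ y)
  rw [norm_neg, sub_neg_eq_add, add_comm (f x)] at htri
  linarith

lemma norm_le_mul_min_dist_pow {n : ℕ} {M S δ : ℝ} (hδ : 0 < δ)
    (hf : ∀ y ∈ ball x δ, ContDiffAt ℝ (n + 1) f y)
    (hM : ∀ y ∈ ball x δ, ‖iteratedFDeriv ℝ (n + 1) f y‖ ≤ M) (hS : ‖f x‖ ≤ S) (hz : f z = 0)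
    (hlow : ∑ k ∈ Finset.range n,
      ‖iteratedFDeriv ℝ (k + 1) f x‖ * min (dist x z) δ ^ (k + 1) ≤ ‖f x‖ / 2) :
    ‖f x‖ ≤ (S / δ ^ (n + 1) + 2 * M) * min (dist x z) δ ^ (n + 1) := by
  have hS0 : 0 ≤ S := (norm_nonneg _).trans hS
  have hM0 : 0 ≤ M := (norm_nonneg _).trans (hM x (mem_ball_self hδ))
  rcases le_or_gt δ (dist x z) with hd | hd
  · rw [min_eq_right hd, add_mul, div_mul_cancel₀ _ (by positivity)]
    exact hS.trans (le_add_of_nonneg_right (by positivity))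
  · rw [min_eq_left hd.le, dist_comm, dist_eq_norm] at hlow ⊢
    have hseg (t : ℝ) (ht : t ∈ Icc (0 : ℝ) 1) : x + t • (z - x) ∈ ball x δ := by
      rw [mem_ball_iff_norm, add_sub_cancel_left, norm_smul, Real.norm_of_nonneg ht.1]
      rw [dist_comm, dist_eq_norm] at hd
      exact (mul_le_of_le_one_left (norm_nonneg _) ht.2).trans_lt hd
    refine (norm_le_of_apply_add_eq_zero (fun t ht ↦ hf _ (hseg t ht))
      (fun t ht ↦ hM _ (hseg t ht)) (by rwa [add_sub_cancel]) hlow).trans ?_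
    gcongr
    exact le_add_of_nonneg_left (by positivity)

lemma exists_mul_norm_le_of_le_norm_iteratedFDeriv {n : ℕ} {c η M S δ : ℝ} (hδ : 0 < δ)
    (hf : ∀ y ∈ ball x δ, ContDiffAt ℝ (n + 1) f y)
    (hM : ∀ y ∈ ball x δ, ‖iteratedFDeriv ℝ (n + 1) f y‖ ≤ M) (hS : ‖f x‖ ≤ S)
    (hc : c ≤ ‖iteratedFDeriv ℝ (n + 1) f x‖) (hz : f z = 0) (hη : 0 ≤ η)
    (hηn : η * (2 * n) ≤ 1) (hηc : η * (S / δ ^ (n + 1) + 2 * M) ≤ c) :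
    ∃ k ≤ n + 1, k ≠ 0 ∧
      η * ‖f x‖ ≤ ‖iteratedFDeriv ℝ k f x‖ * min (dist x z) δ ^ k := by
  by_contra! hlt
  have hlow : ∑ k ∈ Finset.range n,
      ‖iteratedFDeriv ℝ (k + 1) f x‖ * min (dist x z) δ ^ (k + 1) ≤ ‖f x‖ / 2 := by
    refine (Finset.sum_le_card_nsmul _ _ (η * ‖f x‖) fun k hk ↦
      (hlt (k + 1) (by linarith [Finset.mem_range.1 hk]) k.succ_ne_zero).le).trans ?_
    rw [Finset.card_range, nsmul_eq_mul]
    linarith [mul_le_mul_of_nonneg_right hηn (norm_nonneg (f x))]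
  refine (hlt (n + 1) le_rfl n.succ_ne_zero).not_ge ?_
  calc η * ‖f x‖
      ≤ η * ((S / δ ^ (n + 1) + 2 * M) * min (dist x z) δ ^ (n + 1)) := by
        gcongr
        exact norm_le_mul_min_dist_pow hδ hf hM hS hz hlow
    _ = η * (S / δ ^ (n + 1) + 2 * M) * min (dist x z) δ ^ (n + 1) := (mul_assoc ..).symm
    _ ≤ ‖iteratedFDeriv ℝ (n + 1) f x‖ * min (dist x z) δ ^ (n + 1) := by
        gcongr
        exact hηc.trans hc

theorem exists_mul_norm_le_norm_iteratedFDeriv_mul_pow {n : ℕ} (hf : ContDiffAt ℝ (n + 1) f x₀)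
    (hne : iteratedFDeriv ℝ (n + 1) f x₀ ≠ 0) {δ : ℝ} (hδ : 0 < δ) :
    ∃ η > 0, ∀ᶠ x in 𝓝 x₀, ∀ z, f z = 0 → ∃ k ≤ n + 1, k ≠ 0 ∧
      η * ‖f x‖ ≤ ‖iteratedFDeriv ℝ k f x‖ * min (dist x z) δ ^ k := by
  set c := ‖iteratedFDeriv ℝ (n + 1) f x₀‖
  have hc : 0 < c := norm_pos_iff.2 hne
  have hD : ContinuousAt (fun x ↦ ‖iteratedFDeriv ℝ (n + 1) f x‖) x₀ :=
    (hf.continuousAt_iteratedFDeriv le_rfl).norm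
  obtain ⟨r, hr, hball⟩ := eventually_nhds_iff_ball.1 <|
    (hf.eventually (by simp)).and <|
    (hf.continuousAt.norm.eventually_lt_const (lt_add_one ‖f x₀‖)).and <|
    (hD.eventually_lt_const (show c < 2 * c by linarith)).and
    (hD.eventually_const_lt (show c / 2 < c by linarith))
  set ρ := min (r / 2) δ
  have hρ : 0 < ρ := lt_min (by positivity) hδ
  set L := (‖f x₀‖ + 1) / ρ ^ (n + 1) + 2 * (2 * c)
  have hL : 0 < L := by positivity
  set η := min (1 / (2 * ((n : ℝ) + 1))) (c / 2 / L)
  have hη : 0 < η := lt_min (by positivity) (by positivity)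
  have hηn : η * (2 * n) ≤ 1 := by
    have := (le_div_iff₀ (by positivity)).1 (min_le_left _ _ : η ≤ 1 / (2 * ((n : ℝ) + 1)))
    linarith
  have hηc : η * L ≤ c / 2 := (le_div_iff₀ hL).1 (min_le_right _ _)
  refine ⟨η, hη, ?_⟩
  filter_upwards [ball_mem_nhds x₀ (half_pos hr)] with x hx z hz
  have hx_ball : ball x ρ ⊆ ball x₀ r :=
    (ball_subset_ball (min_le_left _ _)).trans (ball_subset_ball' (by
      rw [mem_ball] at hx; linarith))
  obtain ⟨-, hS, -, hlow⟩ := hball x (hx_ball (mem_ball_self hρ))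
  obtain ⟨k, hk, hk0, hle⟩ := exists_mul_norm_le_of_le_norm_iteratedFDeriv hρ
    (fun y hy ↦ (hball y (hx_ball hy)).1) (fun y hy ↦ (hball y (hx_ball hy)).2.2.1.le) hS.le
    hlow.le hz hη.le hηn hηc
  refine ⟨k, hk, hk0, hle.trans ?_⟩
  gcongr
  exact min_le_right _ _

end ZeroSet

section Growth

variable {E : Type*} [NormedAddCommGroup E] [InnerProductSpace ℝ E] [FiniteDimensional ℝ E]
  {u : E → ℝ} {x₀ : E} {K U : Set E} {θ : ℝ}

theorem exists_growth_of_iteratedFDeriv_ne_zero (hu : HarmonicAt u x₀) {n : ℕ}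
    (hne : iteratedFDeriv ℝ (n + 1) u x₀ ≠ 0) (hU : U ∈ 𝓝 x₀) (hθ : 0 < θ) (hθ1 : θ ≤ 1) :
    ∃ C > 1, ∀ᶠ x in 𝓝 x₀, ∀ z, u z = 0 → ∃ y ∈ U, dist x y ≤ θ * dist x z ∧
      C * |u x| ≤ |u y| := by
  obtain ⟨r, hr, hball⟩ := eventually_nhds_iff_ball.1 (hu.eventually.and hU)
  have hδ : 0 < r / 2 := half_pos hr
  obtain ⟨η, hη, hlow⟩ := exists_mul_norm_le_norm_iteratedFDeriv_mul_pow
    ((contDiffAt_of_harmonicAt hu).of_le (mod_cast le_top)) hne hδ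
  obtain ⟨A, hA, hup⟩ := exists_norm_iteratedFDeriv_mul_pow_le_of_abs_le E (n + 1)
  set ε := η * θ ^ (n + 1) / (2 * A)
  have hε : 0 < ε := by positivity
  refine ⟨1 + ε, by linarith, ?_⟩
  filter_upwards [hlow, ball_mem_nhds x₀ hδ] with x hx hxδ z hz
  set m := min (dist x z) (r / 2)
  have hsub : ball x (θ * m) ⊆ ball x₀ r := ball_subset_ball' (by
    have : θ * m ≤ 1 * (r / 2) := by gcongr; exact min_le_right _ _
    rw [mem_ball] at hxδ; linarith)
  rcases eq_or_ne (u x) 0 with hux | hux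
  · exact ⟨x, (hball x (ball_subset_ball (by linarith) hxδ)).2,
      (dist_self x).trans_le (by positivity), by simp only [hux, abs_zero, mul_zero, le_refl]⟩
  have hm : 0 < m := lt_min (dist_pos.2 fun h ↦ hux (h ▸ hz)) hδ
  by_contra! hgrowth
  have hle (y : E) (hy : y ∈ ball x (θ * m)) : |u y| ≤ (1 + ε) * |u x| := by
    refine (hgrowth y (hball y (hsub hy)).2 ((mem_ball'.1 hy).le.trans ?_)).le
    gcongr
    exact min_le_left _ _
  obtain ⟨k, hk, hk0, hηk⟩ := hx z hz
  have hAk := hup u x (θ * m) ε (by positivity) (fun y hy ↦ (hball y (hsub hy)).1) hle k hk hk0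
  have : 0 < η * θ ^ (n + 1) * |u x| := by positivity
  have : η * θ ^ (n + 1) * |u x| ≤ η * θ ^ (n + 1) * |u x| / 2 := calc
    _ = θ ^ (n + 1) * (η * ‖u x‖) := by rw [Real.norm_eq_abs]; ring
    _ ≤ θ ^ k * (‖iteratedFDeriv ℝ k u x‖ * m ^ k) :=
      mul_le_mul (pow_le_pow_of_le_one hθ.le hθ1 hk) hηk (by positivity) (by positivity)
    _ = ‖iteratedFDeriv ℝ k u x‖ * (θ * m) ^ k := by rw [mul_pow]; ring
    _ ≤ A * (ε * |u x|) := hAk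
    _ = _ := by simp only [ε]; field_simp
  linarith

theorem exists_growth_of_isCompact (hK : IsCompact K) (hu : HarmonicOnNhd u K)
    (hne : ∀ x ∈ K, ∃ n : ℕ, iteratedFDeriv ℝ (n + 1) u x ≠ 0) (hKU : U ∈ 𝓝ˢ K) (hθ : 0 < θ)
    (hθ1 : θ ≤ 1) :
    ∃ C > 1, ∀ x ∈ K, ∀ z, u z = 0 → ∃ y ∈ U, dist x y ≤ θ * dist x z ∧
      C * |u x| ≤ |u y| := by
  refine hK.induction_on (p := fun s ↦ ∃ C > 1, ∀ x ∈ s, ∀ z, u z = 0 →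
    ∃ y ∈ U, dist x y ≤ θ * dist x z ∧ C * |u x| ≤ |u y|) ⟨2, by norm_num, by simp⟩ ?_ ?_ ?_
  · rintro s t hst ⟨C, hC, h⟩
    exact ⟨C, hC, fun x hx ↦ h x (hst hx)⟩
  · rintro s t ⟨C, hC, hs⟩ ⟨D, hD, ht⟩
    refine ⟨min C D, lt_min hC hD, fun x hx z hz ↦ ?_⟩
    rcases hx with hx | hx
    · obtain ⟨y, hyU, hy, hle⟩ := hs x hx z hz
      exact ⟨y, hyU, hy, (mul_le_mul_of_nonneg_right (min_le_left _ _) (abs_nonneg _)).trans hle⟩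
    · obtain ⟨y, hyU, hy, hle⟩ := ht x hx z hz
      exact ⟨y, hyU, hy, (mul_le_mul_of_nonneg_right (min_le_right _ _) (abs_nonneg _)).trans hle⟩
  · intro x hx
    obtain ⟨n, hn⟩ := hne x hx
    obtain ⟨C, hC, h⟩ := exists_growth_of_iteratedFDeriv_ne_zero (hu x hx) hn
      (mem_nhdsSet_iff_forall.1 hKU x hx) hθ hθ1
    exact ⟨_, mem_nhdsWithin_of_mem_nhds h, C, hC, fun x hx ↦ hx⟩

end Growth

lemma HarmonicOnSet.harmonicOnNhd {n : ℕ} {u : En n → ℝ} {Ω : Set (En n)}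
    (hu : HarmonicOnSet u Ω) (hΩ : IsOpen Ω) : HarmonicOnNhd u Ω := by
  refine fun x hx ↦ ⟨hu.1.contDiffAt (hΩ.mem_nhds hx), ?_⟩
  filter_upwards [hΩ.mem_nhds hx] with y hy
  rw [laplacian_eq_iteratedFDeriv_orthonormalBasis u (EuclideanSpace.basisFun (Fin n) ℝ)]
  simpa only [laplacianAt, EuclideanSpace.basisFun_apply, Pi.zero_apply] using hu.2 y hy

theorem stmt12_general {E : Type*} [NormedAddCommGroup E] [InnerProductSpace ℝ E]
    [FiniteDimensional ℝ E] {u : E → ℝ} {Ω K U : Set E} {θ : ℝ} (hΩ : IsPreconnected Ω)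
    (hu : HarmonicOnNhd u Ω) (hZ : {z ∈ Ω | u z = 0}.Nonempty) (hK : IsCompact K) (hKΩ : K ⊆ Ω)
    (hKU : U ∈ 𝓝ˢ K) (hθ : 0 < θ) :
    ∃ C, 1 < C ∧ ∀ x ∈ K, ∃ y ∈ U,
      dist x y ≤ θ * infDist x {z ∈ Ω | u z = 0} ∧ C * |u x| ≤ |u y| := by
  set Z := {z ∈ Ω | u z = 0}
  have hself (x : E) (hx : x ∈ K) (hux : u x = 0) (C : ℝ) :
      ∃ y ∈ U, dist x y ≤ θ * infDist x Z ∧ C * |u x| ≤ |u y| :=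
    ⟨x, subset_of_mem_nhdsSet hKU hx, (dist_self x).trans_le (mul_nonneg hθ.le infDist_nonneg),
      by simp [hux]⟩
  by_cases hzero : ∀ x ∈ Ω, u x = 0
  · exact ⟨2, one_lt_two, fun x hx ↦ hself x hx (hzero x (hKΩ hx)) 2⟩
  have hne (x : E) (hx : x ∈ K) : ∃ n : ℕ, iteratedFDeriv ℝ (n + 1) u x ≠ 0 := by
    by_contra! h
    have hconst := eqOn_const_of_iteratedFDeriv_eq_zero hΩ hu (hKΩ hx) fun k hk ↦
      Nat.succ_pred_eq_of_ne_zero hk ▸ h k.pred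
    obtain ⟨z, hzΩ, hz⟩ := hZ
    exact hzero fun y hy ↦ (hconst hy).trans ((hconst hzΩ).symm.trans hz)
  obtain ⟨C, hC, hgrowth⟩ := exists_growth_of_isCompact hK (hu.mono hKΩ) hne hKU
    (lt_min (half_pos hθ) one_pos) (min_le_right _ _)
  refine ⟨C, hC, fun x hx ↦ ?_⟩
  by_cases hux : u x = 0
  · exact hself x hx hux C
  have hx_cl : x ∉ closure Z := fun hcl ↦ hux <| by
    simpa using (hu x (hKΩ hx)).1.continuousAt.continuousWithinAt.mem_closure hcl
      (t := {0}) fun z hz ↦ hz.2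
  have hd : 0 < infDist x Z := (infDist_pos_iff_notMem_closure hZ).1 hx_cl
  obtain ⟨z, hz, hxz⟩ := (infDist_lt_iff hZ).1 (lt_mul_of_one_lt_left hd one_lt_two)
  obtain ⟨y, hyU, hxy, hle⟩ := hgrowth x hx z hz.2
  refine ⟨y, hyU, hxy.trans ?_, hle⟩
  calc min (θ / 2) 1 * dist x z ≤ θ / 2 * (2 * infDist x Z) := by
        gcongr
        exact min_le_left _ _
    _ = θ * infDist x Z := by ring

theorem stmt12 (n : ℕ) (v : En n → ℝ)
    (hv : HarmonicOnSet v (ball 0 1))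
    (hnc : ¬ ∃ c : ℝ, ∀ x ∈ ball (0 : En n) 1, v x = c)
    (hZ : (zeroSet v (ball 0 1) ∩ ball (0 : En n) (1/2)).Nonempty) :
    ∃ C : ℝ, 1 < C ∧ ∀ x ∈ ball (0 : En n) (1/4), v x ≠ 0 →
      ∃ x' ∈ ball (0 : En n) (1/2),
        dist x x' ≤ (3/4) * infDist x (zeroSet v (ball 0 1)) ∧ C * |v x| ≤ |v x'| := by
  have hU : ball (0 : En n) (1 / 2) ∈ 𝓝ˢ (closedBall 0 (1 / 4)) :=
    isOpen_ball.mem_nhdsSet.2 (closedBall_subset_ball (by norm_num))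
  obtain ⟨C, hC, h⟩ := stmt12_general (convex_ball 0 1).isPreconnected
    (hv.harmonicOnNhd isOpen_ball) hZ.left (isCompact_closedBall 0 (1 / 4))
    (closedBall_subset_ball (by norm_num)) hU (by norm_num : (0 : ℝ) < 3 / 4)
  exact ⟨C, hC, fun x hx _ ↦ h x (ball_subset_closedBall hx)⟩
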